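/- arXiv:0803.2770 — 5 statements merged into one kernel-verified Lean document; each statement's English description precedes it below -/
import Mathlib

section
/- Let A and B be Hermitian matrices on a finite-dimensional complex Hilbert space, and let T be a completely positive trace-preserving map given in Kraus form, T(X) = ∑_{i=1}^m V_i X V_iᴴ with ∑_{i=1}^m V_iᴴ V_i = I, where the V_i are linear maps into a (possibly different) finite-dimensional Hilbert space. Then Tr[{T(A) ≥ T(B)} (T(A) − T(B))] ≤ Tr[{A ≥ B}(A−B)]. -/
/-!
The proof is the variational (Helstrom) characterization of the positive part: for Hermitian `X`
and any effect `0 ≤ Q ≤ 1`, `re Tr (Q X) ≤ re Tr ({X ≥ 0} X)` (`effect_trace_le`). In an eigenbasis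
of `X` the left side is `∑ λᵢ qᵢ` with `0 ≤ qᵢ ≤ 1`, while the right side is the sum of the
nonnegative `λᵢ`.

The adjoint map `P ↦ ∑ Vᵢᴴ P Vᵢ` is positive and, because `∑ Vᵢᴴ Vᵢ = 1`, unital, so it sends
effects to effects. Applied to `P = {T(A) ≥ T(B)}`, cyclicity of the trace gives
`Tr (P (T(A) - T(B))) = Tr (Q (A - B))` with `Q` an effect, and the characterization concludes.
-/

open scoped ComplexOrder
open scoped Matrix

open Matrix in
/-- The spectral projection of a Hermitian matrix onto the span of its eigenvectors whose
eigenvalues satisfy the predicate `q` (junk value `0` for non-Hermitian input). -/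
noncomputable def spectralProj {d : ℕ} (X : Matrix (Fin d) (Fin d) ℂ) (q : ℝ → Prop)
    [DecidablePred q] : Matrix (Fin d) (Fin d) ℂ :=
  if hX : X.IsHermitian then
    (hX.eigenvectorUnitary : Matrix (Fin d) (Fin d) ℂ) *
      Matrix.diagonal (fun i => if q (hX.eigenvalues i) then (1 : ℂ) else 0) *
      star (hX.eigenvectorUnitary : Matrix (Fin d) (Fin d) ℂ)
  else 0

/-- `{X ≥ 0}`: spectral projection onto eigenspaces with nonnegative eigenvalues. -/
noncomputable def projNonneg {d : ℕ} (X : Matrix (Fin d) (Fin d) ℂ) : Matrix (Fin d) (Fin d) ℂ :=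
  spectralProj X (fun t => 0 ≤ t)

open Matrix in
private lemma projNonneg_eq {d : ℕ} {X : Matrix (Fin d) (Fin d) ℂ} (hX : X.IsHermitian) :
    projNonneg X = (hX.eigenvectorUnitary : Matrix (Fin d) (Fin d) ℂ) *
      Matrix.diagonal (fun i => if 0 ≤ hX.eigenvalues i then (1 : ℂ) else 0) *
      (hX.eigenvectorUnitary : Matrix (Fin d) (Fin d) ℂ)ᴴ := by
  simp [projNonneg, spectralProj, hX, star_eq_conjTranspose]

open Matrix in
private lemma projNonneg_posSemidef {d : ℕ} {X : Matrix (Fin d) (Fin d) ℂ}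
    (hX : X.IsHermitian) : (projNonneg X).PosSemidef := by
  rw [projNonneg_eq hX]
  refine PosSemidef.mul_mul_conjTranspose_same (PosSemidef.diagonal fun i => ?_) _
  by_cases h : 0 ≤ hX.eigenvalues i <;> simp [h]

open Matrix in
private lemma one_sub_projNonneg_posSemidef {d : ℕ} {X : Matrix (Fin d) (Fin d) ℂ}
    (hX : X.IsHermitian) : (1 - projNonneg X).PosSemidef := by
  have hU : (hX.eigenvectorUnitary : Matrix (Fin d) (Fin d) ℂ) *
      (hX.eigenvectorUnitary : Matrix (Fin d) (Fin d) ℂ)ᴴ = 1 :=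
    Unitary.coe_mul_star_self hX.eigenvectorUnitary
  have h1 : 1 - projNonneg X = (hX.eigenvectorUnitary : Matrix (Fin d) (Fin d) ℂ) *
      Matrix.diagonal (fun i => 1 - if 0 ≤ hX.eigenvalues i then (1 : ℂ) else 0) *
      (hX.eigenvectorUnitary : Matrix (Fin d) (Fin d) ℂ)ᴴ := by
    rw [projNonneg_eq hX, ← diagonal_sub, diagonal_one, mul_sub, sub_mul, mul_one, hU]
  rw [h1]
  refine PosSemidef.mul_mul_conjTranspose_same (PosSemidef.diagonal fun i => ?_) _
  by_cases h : 0 ≤ hX.eigenvalues i <;> simp [h]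

open Matrix in
/-- The trace of `Q * X`, computed in an eigenbasis of `X`. -/
private lemma trace_mul_eq_sum {d : ℕ} {X : Matrix (Fin d) (Fin d) ℂ} (hX : X.IsHermitian)
    (Q : Matrix (Fin d) (Fin d) ℂ) :
    (Q * X).trace.re = ∑ i, (((hX.eigenvectorUnitary : Matrix (Fin d) (Fin d) ℂ)ᴴ * Q *
      (hX.eigenvectorUnitary : Matrix (Fin d) (Fin d) ℂ)) i i).re * hX.eigenvalues i := by
  have hs : X = (hX.eigenvectorUnitary : Matrix (Fin d) (Fin d) ℂ) *
      diagonal (fun i => (hX.eigenvalues i : ℂ)) *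
      (hX.eigenvectorUnitary : Matrix (Fin d) (Fin d) ℂ)ᴴ := by
    have h := hX.spectral_theorem
    rw [Unitary.conjStarAlgAut_apply] at h
    exact h
  generalize (hX.eigenvectorUnitary : Matrix (Fin d) (Fin d) ℂ) = U at hs ⊢
  generalize hX.eigenvalues = l at hs ⊢
  subst hs
  rw [show Q * (U * diagonal (fun i => (l i : ℂ)) * Uᴴ) =
    (Q * U * diagonal (fun i => (l i : ℂ))) * Uᴴ by simp only [mul_assoc], trace_mul_comm,
    ← mul_assoc, ← mul_assoc, trace, Complex.re_sum]
  simp [mul_diagonal]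

open Matrix in
/-- The projection `{X ≥ 0}` maximizes `re Tr (Q X)` over all effects `0 ≤ Q ≤ 1`. -/
private lemma effect_trace_le {d : ℕ} {X Q : Matrix (Fin d) (Fin d) ℂ} (hX : X.IsHermitian)
    (hQ : Q.PosSemidef) (hQ1 : (1 - Q).PosSemidef) :
    (Q * X).trace.re ≤ (projNonneg X * X).trace.re := by
  rw [trace_mul_eq_sum hX, trace_mul_eq_sum hX, projNonneg_eq hX]
  have hU : (hX.eigenvectorUnitary : Matrix (Fin d) (Fin d) ℂ)ᴴ *
      (hX.eigenvectorUnitary : Matrix (Fin d) (Fin d) ℂ) = 1 :=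
    Unitary.coe_star_mul_self hX.eigenvectorUnitary
  generalize (hX.eigenvectorUnitary : Matrix (Fin d) (Fin d) ℂ) = U at hU ⊢
  refine Finset.sum_le_sum fun i _ => ?_
  have hD (D : Matrix (Fin d) (Fin d) ℂ) : Uᴴ * (U * D * Uᴴ) * U = D := by
    rw [show Uᴴ * (U * D * Uᴴ) * U = (Uᴴ * U) * D * (Uᴴ * U) by simp only [mul_assoc], hU,
      one_mul, mul_one]
  have h0 : 0 ≤ ((Uᴴ * Q * U) i i).re :=
    (Complex.le_def.1 (hQ.conjTranspose_mul_mul_same U).diag_nonneg).1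
  have h1 : 0 ≤ ((Uᴴ * (1 - Q) * U) i i).re :=
    (Complex.le_def.1 (hQ1.conjTranspose_mul_mul_same U).diag_nonneg).1
  rw [mul_sub, sub_mul, mul_one, hU, Matrix.sub_apply, one_apply_eq, Complex.sub_re, Complex.one_re] at h1
  rw [hD, diagonal_apply_eq]
  by_cases h : 0 ≤ hX.eigenvalues i
  · simp only [h, if_true, Complex.one_re]
    nlinarith
  · simp only [h, if_false, Complex.zero_re]
    nlinarith

/-- For Hermitian `A`, `B` and a CPTP map `T` in Kraus form,
`Tr[{T(A) ≥ T(B)}(T(A) - T(B))] ≤ Tr[{A ≥ B}(A - B)]`. -/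
theorem stmt2 {d d' m : ℕ} (A B : Matrix (Fin d) (Fin d) ℂ)
    (hA : A.IsHermitian) (hB : B.IsHermitian)
    (V : Fin m → Matrix (Fin d') (Fin d) ℂ)
    (hV : ∑ i, (V i)ᴴ * V i = 1) :
    ((projNonneg ((∑ i, V i * A * (V i)ᴴ) - ∑ i, V i * B * (V i)ᴴ)) *
        ((∑ i, V i * A * (V i)ᴴ) - ∑ i, V i * B * (V i)ᴴ)).trace.re ≤
      (projNonneg (A - B) * (A - B)).trace.re := by
  have hAB := hA.sub hB
  have hT : (∑ i, V i * A * (V i)ᴴ) - ∑ i, V i * B * (V i)ᴴ = ∑ i, V i * (A - B) * (V i)ᴴ := by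
    simp only [Matrix.mul_sub, Matrix.sub_mul, Finset.sum_sub_distrib]
  rw [hT]
  generalize A - B = X at hAB ⊢
  have hTX : (∑ i, V i * X * (V i)ᴴ).IsHermitian := by
    rw [Matrix.IsHermitian, Matrix.conjTranspose_sum]
    exact Finset.sum_congr rfl fun i _ => Matrix.isHermitian_mul_mul_conjTranspose (V i) hAB
  have hP := projNonneg_posSemidef hTX
  have hP1 := one_sub_projNonneg_posSemidef hTX
  generalize projNonneg (∑ i, V i * X * (V i)ᴴ) = P at hP hP1 ⊢
  -- Pass to the adjoint map: `Tr (P T(X)) = Tr (Tᴴ(P) X)`.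
  have htr : (P * ∑ i, V i * X * (V i)ᴴ).trace = ((∑ i, (V i)ᴴ * P * V i) * X).trace := by
    rw [Finset.mul_sum, Finset.sum_mul, Matrix.trace_sum, Matrix.trace_sum]
    refine Finset.sum_congr rfl fun i _ => ?_
    rw [← Matrix.mul_assoc, Matrix.trace_mul_comm]
    simp only [Matrix.mul_assoc]
  have hQ1 : 1 - ∑ i, (V i)ᴴ * P * V i = ∑ i, (V i)ᴴ * (1 - P) * V i := by
    simp only [Matrix.mul_sub, Matrix.sub_mul, Finset.sum_sub_distrib, Matrix.mul_one, hV]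
  rw [htr]
  refine effect_trace_le hAB ?_ ?_
  · exact Matrix.posSemidef_sum _ fun i _ => hP.conjTranspose_mul_mul_same (V i)
  · rw [hQ1]
    exact Matrix.posSemidef_sum _ fun i _ => hP1.conjTranspose_mul_mul_same (V i)
end

section
/- Let ρ be a state and σ a positive semidefinite matrix on a finite-dimensional complex Hilbert space with supp ρ ⊆ supp σ, and let T(X) = ∑_{i=1}^m V_i X V_iᴴ with ∑_{i=1}^m V_iᴴ V_i = I be a CPTP map in Kraus form (so that supp T(ρ) ⊆ supp T(σ) and the following quantities are defined). Then D_min(T(ρ)||T(σ)) ≤ D_min(ρ||σ), i.e., the min-relative entropy is monotonic under CPTP maps. -/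
/-!
Write `P` for the support projection of `ρ` and `Q` for that of `T(ρ)`. Since `(1 - Q) T(ρ) = 0`
and `T(ρ)` is a sum of positive terms `Vᵢ ρ Vᵢᴴ`, each `(1 - Q) Vᵢ ρ` vanishes, that is
`Q Vᵢ P = Vᵢ P` (`suppProj_kraus_mul`). With `∑ Vᵢᴴ Vᵢ = 1` it follows that the pulled-back
effect `E = ∑ Vᵢᴴ Q Vᵢ` satisfies `E P = P = P E`, so `E - P = (1 - P) E (1 - P) ≥ 0` and
`Tr(P σ) ≤ Tr(E σ) = Tr(Q T(σ))` (`trace_suppProj_le`). As `Real.logb 2 0 = 0`, taking logarithms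
also needs `Tr(P σ) > 0`; this is where `supp ρ ⊆ supp σ` and `ρ ≠ 0` enter
(`trace_suppProj_pos`).
-/

open scoped ComplexOrder
open scoped Matrix

/-- The orthogonal projection onto the support of a Hermitian matrix. -/
noncomputable def suppProj {d : ℕ} (X : Matrix (Fin d) (Fin d) ℂ) : Matrix (Fin d) (Fin d) ℂ :=
  spectralProj X (fun t => t ≠ 0)

/-- The support (range) of a matrix, as a submodule of `Fin d → ℂ`. -/
noncomputable def msupp {d : ℕ} (X : Matrix (Fin d) (Fin d) ℂ) : Submodule ℂ (Fin d → ℂ) :=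
  LinearMap.range X.mulVecLin

/-- The min-relative entropy `D_min(ρ‖σ) = -log₂ Tr(π_ρ σ)`. -/
noncomputable def Dmin {d : ℕ} (ρ σ : Matrix (Fin d) (Fin d) ℂ) : ℝ :=
  - Real.logb 2 ((suppProj ρ * σ).trace.re)

open Matrix in
/-- The properties of the support projection `P` of a Hermitian matrix `X` that characterise it
as the orthogonal projection onto the range of `X`. -/
theorem suppProj_spec {d : ℕ} {X : Matrix (Fin d) (Fin d) ℂ} (hX : X.IsHermitian) :
    (suppProj X)ᴴ = suppProj X ∧ X * suppProj X = X ∧ suppProj X * X = X ∧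
      (∃ R, suppProj X = X * R) ∧ suppProj X * suppProj X = suppProj X := by
  set U : Matrix (Fin d) (Fin d) ℂ := (hX.eigenvectorUnitary : Matrix (Fin d) (Fin d) ℂ) with hU
  have hUU : star U * U = 1 := Unitary.coe_star_mul_self hX.eigenvectorUnitary
  have hspec : X = U * diagonal (fun i => (hX.eigenvalues i : ℂ)) * star U := by
    have h := hX.spectral_theorem
    rw [Unitary.conjStarAlgAut_apply] at h
    exact h
  have hP : suppProj X =
      U * diagonal (fun i => if hX.eigenvalues i ≠ 0 then (1 : ℂ) else 0) * star U := by
    unfold suppProj spectralProj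
    rw [dif_pos hX]
  have hmul : ∀ f g : Fin d → ℂ, (U * diagonal f * star U) * (U * diagonal g * star U) =
      U * diagonal (fun i => f i * g i) * star U := by
    intro f g
    rw [← diagonal_mul_diagonal]
    calc _ = U * diagonal f * (star U * U) * diagonal g * star U := by
          simp only [Matrix.mul_assoc]
      _ = _ := by rw [hUU]; simp only [Matrix.mul_assoc, Matrix.one_mul]
  have h1 : (suppProj X)ᴴ = suppProj X := by
    rw [hP]
    simp only [conjTranspose_mul, star_eq_conjTranspose, conjTranspose_conjTranspose,
      diagonal_conjTranspose, Matrix.mul_assoc]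
    congr 3
    funext i
    by_cases h : hX.eigenvalues i = 0 <;> simp [h]
  have h2 : X * suppProj X = X := by
    conv_lhs => rw [hP]; lhs; rw [hspec]
    rw [hmul]
    conv_rhs => rw [hspec]
    congr 3
    funext i
    by_cases h : hX.eigenvalues i = 0 <;> simp [h]
  have h3 : suppProj X * X = X := by
    have h := congrArg conjTranspose h2
    rwa [conjTranspose_mul, h1, hX.eq] at h
  have h4 : ∃ R, suppProj X = X * R := by
    -- the pseudo-inverse of `X`, using `0⁻¹ = 0`
    refine ⟨U * diagonal (fun i => ((hX.eigenvalues i : ℂ))⁻¹) * star U, ?_⟩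
    conv_rhs => lhs; rw [hspec]
    rw [hmul, hP]
    congr 3
    funext i
    by_cases h : hX.eigenvalues i = 0 <;> simp [h]
  refine ⟨h1, h2, h3, h4, ?_⟩
  obtain ⟨R, hR⟩ := h4
  conv_lhs => rw [hR, ← Matrix.mul_assoc, ← hR, h3]
  exact hR.symm

open scoped MatrixOrder in
theorem Matrix.PosSemidef.exists_conjTranspose_mul_self {n : ℕ} {A : Matrix (Fin n) (Fin n) ℂ}
    (hA : A.PosSemidef) : ∃ C : Matrix (Fin n) (Fin n) ℂ, A = Cᴴ * C :=
  CStarAlgebra.nonneg_iff_eq_star_mul_self.1 hA.nonneg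

open Matrix in
theorem posSemidef_mul_eq_zero_of_trace {n k : ℕ} {A : Matrix (Fin n) (Fin n) ℂ}
    (hA : A.PosSemidef) (B : Matrix (Fin k) (Fin n) ℂ) (h : (B * A * Bᴴ).trace = 0) :
    B * A = 0 := by
  obtain ⟨C, rfl⟩ := hA.exists_conjTranspose_mul_self
  have h' : ((B * Cᴴ) * (B * Cᴴ)ᴴ).trace = 0 := by
    simpa [Matrix.mul_assoc] using h
  rw [trace_mul_conjTranspose_self_eq_zero_iff] at h'
  rw [← Matrix.mul_assoc, h', Matrix.zero_mul]

open Matrix in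
/-- Every Kraus operator maps the support of `ρ` into the support of the output state. -/
theorem suppProj_kraus_mul {d d' m : ℕ} {ρ : Matrix (Fin d) (Fin d) ℂ}
    (hρ : ρ.PosSemidef) (V : Fin m → Matrix (Fin d') (Fin d) ℂ) (i : Fin m) :
    suppProj (∑ i, V i * ρ * (V i)ᴴ) * V i * suppProj ρ = V i * suppProj ρ := by
  set τ := ∑ i, V i * ρ * (V i)ᴴ with hτ
  have hτp : τ.PosSemidef :=
    posSemidef_sum _ fun i _ => hρ.mul_mul_conjTranspose_same (V i)
  obtain ⟨-, -, hQ, -, -⟩ := suppProj_spec hτp.isHermitian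
  obtain ⟨-, -, -, ⟨R, hR⟩, -⟩ := suppProj_spec hρ.isHermitian
  set Q := suppProj τ
  have hz : (1 - Q) * τ * (1 - Q)ᴴ = 0 := by
    rw [Matrix.sub_mul, hQ, Matrix.one_mul, sub_self, Matrix.zero_mul]
  have hsum : ∑ j, (((1 - Q) * V j) * ρ * ((1 - Q) * V j)ᴴ).trace = 0 := by
    rw [← trace_sum]
    have : ∑ j, ((1 - Q) * V j) * ρ * ((1 - Q) * V j)ᴴ = (1 - Q) * τ * (1 - Q)ᴴ := by
      rw [hτ, Matrix.mul_sum, Matrix.sum_mul]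
      simp only [conjTranspose_mul, Matrix.mul_assoc]
    rw [this, hz, trace_zero]
  have hi := (Finset.sum_eq_zero_iff_of_nonneg fun j _ =>
    (hρ.mul_mul_conjTranspose_same ((1 - Q) * V j)).trace_nonneg).1 hsum i (Finset.mem_univ i)
  have h0 := posSemidef_mul_eq_zero_of_trace hρ _ hi
  have h1 : (1 - Q) * V i * suppProj ρ = 0 := by
    rw [hR, ← Matrix.mul_assoc, h0, Matrix.zero_mul]
  rw [Matrix.sub_mul, Matrix.sub_mul, Matrix.one_mul, sub_eq_zero] at h1
  exact h1.symm

open Matrix in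
theorem trace_suppProj_pos {d : ℕ} {ρ σ : Matrix (Fin d) (Fin d) ℂ}
    (hρ : ρ.PosSemidef) (hρtr : ρ.trace = 1) (hσ : σ.PosSemidef) (hsupp : msupp ρ ≤ msupp σ) :
    0 < (suppProj ρ * σ).trace := by
  obtain ⟨hPh, -, hPρ, -, hPP⟩ := suppProj_spec hρ.isHermitian
  set P := suppProj ρ
  have htr : (P * σ).trace = (P * σ * Pᴴ).trace := by
    rw [hPh, trace_mul_comm (P * σ), ← Matrix.mul_assoc, hPP]
  rw [htr]
  refine lt_of_le_of_ne (hσ.mul_mul_conjTranspose_same P).trace_nonneg fun h => ?_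
  have h0 : P * σ = 0 := posSemidef_mul_eq_zero_of_trace hσ P h.symm
  have hz : ρ = 0 := by
    rw [← hPρ]
    -- each column of `ρ` lies in the range of `σ`, which `P` annihilates
    refine Matrix.ext_of_mulVec_single fun j => ?_
    obtain ⟨w, hw⟩ : ρ *ᵥ Pi.single j 1 ∈ msupp σ := hsupp ⟨_, rfl⟩
    rw [← mulVec_mulVec, ← hw, mulVecLin_apply, mulVec_mulVec, h0, zero_mulVec, zero_mulVec]
  rw [hz, trace_zero] at hρtr
  exact zero_ne_one hρtr

open Matrix in
/-- With `E = ∑ Vᵢᴴ Q Vᵢ` the pulled-back projection, `E P = P E = P`, hence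
`E - P = (1 - P) E (1 - P)` is positive semidefinite. -/
theorem trace_suppProj_le {d d' m : ℕ} {ρ σ : Matrix (Fin d) (Fin d) ℂ}
    (hρ : ρ.PosSemidef) (hσ : σ.PosSemidef) (V : Fin m → Matrix (Fin d') (Fin d) ℂ)
    (hV : ∑ i, (V i)ᴴ * V i = 1) :
    (suppProj ρ * σ).trace ≤
      (suppProj (∑ i, V i * ρ * (V i)ᴴ) * ∑ i, V i * σ * (V i)ᴴ).trace := by
  have hτp : (∑ i, V i * ρ * (V i)ᴴ).PosSemidef :=
    posSemidef_sum _ fun i _ => hρ.mul_mul_conjTranspose_same (V i)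
  obtain ⟨hQh, -, -, -, hQQ⟩ := suppProj_spec hτp.isHermitian
  obtain ⟨hPh, -, -, -, hPP⟩ := suppProj_spec hρ.isHermitian
  have hQVP := suppProj_kraus_mul hρ V
  set Q := suppProj (∑ i, V i * ρ * (V i)ᴴ)
  set P := suppProj ρ
  set E := ∑ i, (V i)ᴴ * Q * V i with hE
  have hEP : E * P = P := by
    calc E * P = ∑ i, (V i)ᴴ * (Q * V i * P) := by
          rw [hE, Matrix.sum_mul]; simp only [Matrix.mul_assoc]
      _ = (∑ i, (V i)ᴴ * V i) * P := by
          rw [Matrix.sum_mul]; simp only [hQVP, Matrix.mul_assoc]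
      _ = P := by rw [hV, Matrix.one_mul]
  have hEh : Eᴴ = E := by
    simp [hE, conjTranspose_sum, hQh, Matrix.mul_assoc]
  have hPE : P * E = P := by
    have h := congrArg conjTranspose hEP
    rwa [conjTranspose_mul, hPh, hEh] at h
  have hEpsd : E.PosSemidef := posSemidef_sum _ fun i _ => by
    have : (V i)ᴴ * Q * V i = (Q * V i)ᴴ * (Q * V i) := by
      rw [conjTranspose_mul, hQh, ← Matrix.mul_assoc, Matrix.mul_assoc (V i)ᴴ Q Q, hQQ]
    rw [this]
    exact posSemidef_conjTranspose_mul_self _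
  have hdiff : (E - P).PosSemidef := by
    have : E - P = (1 - P) * E * (1 - P)ᴴ := by
      rw [conjTranspose_sub, conjTranspose_one, hPh]
      simp only [Matrix.sub_mul, Matrix.mul_sub, Matrix.one_mul, Matrix.mul_one, hEP, hPE, hPP]
      simp
    rw [this]
    exact hEpsd.mul_mul_conjTranspose_same _
  have htr : (Q * ∑ i, V i * σ * (V i)ᴴ).trace = (E * σ).trace := by
    rw [hE, Matrix.mul_sum, Matrix.sum_mul, trace_sum, trace_sum]
    refine Finset.sum_congr rfl fun i _ => ?_
    rw [← Matrix.mul_assoc, trace_mul_comm]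
    simp only [Matrix.mul_assoc]
  rw [htr, ← sub_nonneg, ← trace_sub, ← Matrix.sub_mul]
  obtain ⟨C, hC⟩ := hdiff.exists_conjTranspose_mul_self
  rw [hC, Matrix.mul_assoc, trace_mul_comm]
  exact (hσ.mul_mul_conjTranspose_same C).trace_nonneg

/-- monotonicity of the min-relative entropy under CPTP maps in Kraus form. -/
theorem stmt5 {d d' m : ℕ} (ρ σ : Matrix (Fin d) (Fin d) ℂ)
    (hρ : ρ.PosSemidef) (hρtr : ρ.trace = 1) (hσ : σ.PosSemidef)
    (hsupp : msupp ρ ≤ msupp σ)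
    (V : Fin m → Matrix (Fin d') (Fin d) ℂ)
    (hV : ∑ i, (V i)ᴴ * V i = 1) :
    Dmin (∑ i, V i * ρ * (V i)ᴴ) (∑ i, V i * σ * (V i)ᴴ) ≤ Dmin ρ σ := by
  unfold Dmin
  have hpos := (Complex.lt_def.1 (trace_suppProj_pos hρ hρtr hσ hsupp)).1
  have hle := (Complex.le_def.1 (trace_suppProj_le hρ hσ V hV)).1
  exact neg_le_neg (Real.logb_le_logb_of_le (by norm_num) hpos hle)
end

section
/- Let ρ be a state and σ a positive semidefinite matrix on a finite-dimensional complex Hilbert space with supp ρ ⊆ supp σ, and let T(X) = ∑_{i=1}^m V_i X V_iᴴ with ∑_{i=1}^m V_iᴴ V_i = I be a CPTP map in Kraus form. Then supp T(ρ) ⊆ supp T(σ) and D_max(T(ρ)||T(σ)) ≤ D_max(ρ||σ), i.e., the max-relative entropy is monotonic under CPTP maps. -/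
/-!
A Kraus map `T` is linear and positive, so `ρ ≤ l σ` implies `T(ρ) ≤ l T(σ)`: the set of admissible
`l` can only grow under `T`, and its infimum can only decrease. Since `Dmax` is the logarithm of a
real infimum, two things remain to be checked. The set of admissible `l` for `(ρ, σ)` is nonempty,
which is where the support condition enters (`exists_posSemidef_smul_sub`). The infimum for
`(T(ρ), T(σ))` is positive: since `T` preserves the trace, `T(ρ) ≤ l T(σ)` forces
`1 ≤ l Tr T(σ)` (`one_le_mul_trace`).

The inclusion of supports also follows from `T(ρ) ≤ l T(σ)`: this gives
`ker T(σ) ≤ ker T(ρ)`, and for Hermitian matrices kernels and ranges are in order-reversing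
correspondence.
-/

open scoped ComplexOrder
open scoped Matrix

/-- The max-relative entropy `D_max(ρ‖σ) = log₂ min {λ ≥ 0 : ρ ≤ λ σ}`, where `≤` is the
Löwner order. -/
noncomputable def Dmax {d : ℕ} (ρ σ : Matrix (Fin d) (Fin d) ℂ) : ℝ :=
  Real.logb 2 (sInf {l : ℝ | 0 ≤ l ∧ (l • σ - ρ).PosSemidef})

open scoped MatrixOrder in
open scoped Matrix.Norms.L2Operator in
theorem exists_posSemidef_smul_one_sub {n : ℕ} {M : Matrix (Fin n) (Fin n) ℂ}
    (hM : M.IsHermitian) : ∃ c : ℝ, 0 ≤ c ∧ (c • (1 : Matrix (Fin n) (Fin n) ℂ) - M).PosSemidef := by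
  refine ⟨‖M‖, norm_nonneg _, ?_⟩
  have h := IsSelfAdjoint.le_algebraMap_norm_self (a := M) hM
  rwa [Algebra.algebraMap_eq_smul_one] at h

/-- A matrix `B` whose kernel contains the kernel of `A` factors through `A` on the left. -/
theorem exists_eq_mul_of_ker_le {n k l : ℕ} (A : Matrix (Fin k) (Fin n) ℂ)
    (B : Matrix (Fin l) (Fin n) ℂ) (h : LinearMap.ker A.mulVecLin ≤ LinearMap.ker B.mulVecLin) :
    ∃ Y : Matrix (Fin l) (Fin k) ℂ, B = Y * A := by
  obtain ⟨s, hs⟩ := A.mulVecLin.rangeRestrict.exists_rightInverse_of_surjective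
    A.mulVecLin.range_rangeRestrict
  obtain ⟨g, hg⟩ := (B.mulVecLin ∘ₗ s).exists_extend
  refine ⟨LinearMap.toMatrix' g, ?_⟩
  apply Matrix.toLin'.injective
  rw [Matrix.toLin'_mul, Matrix.toLin'_toMatrix']
  refine LinearMap.ext fun x => ?_
  have hgx : g (A.mulVecLin x) = B.mulVecLin (s (A.mulVecLin.rangeRestrict x)) :=
    LinearMap.congr_fun hg (A.mulVecLin.rangeRestrict x)
  have hsx : A.mulVecLin (s (A.mulVecLin.rangeRestrict x)) = A.mulVecLin x :=
    congrArg Subtype.val (LinearMap.congr_fun hs (A.mulVecLin.rangeRestrict x))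
  have hker : s (A.mulVecLin.rangeRestrict x) - x ∈ LinearMap.ker B.mulVecLin :=
    h (by rw [LinearMap.mem_ker, map_sub, hsx, sub_self])
  rw [LinearMap.mem_ker, map_sub, sub_eq_zero] at hker
  exact (hgx.trans hker).symm

/-- For Hermitian matrices, an inclusion of supports reverses to an inclusion of kernels. -/
theorem ker_le_of_msupp_le {n : ℕ} {A B : Matrix (Fin n) (Fin n) ℂ} (hA : A.IsHermitian)
    (hB : B.IsHermitian) (h : msupp A ≤ msupp B) :
    LinearMap.ker B.mulVecLin ≤ LinearMap.ker A.mulVecLin := by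
  have hcol : ∀ j, ∃ x, B.mulVecLin x = A.mulVecLin (Pi.single j 1) := fun j => h ⟨_, rfl⟩
  choose x hx using hcol
  have hfac : A = B * (Matrix.of x)ᵀ := by
    ext i j
    have := congrFun (hx j) i
    simp only [Matrix.mulVecLin_apply, Matrix.mulVec_single_one] at this
    exact this.symm
  have hfac' : A = (Matrix.of x)ᵀᴴ * B := by
    conv_lhs => rw [← hA.eq, hfac, Matrix.conjTranspose_mul, hB.eq]
  intro v hv
  rw [LinearMap.mem_ker, Matrix.mulVecLin_apply] at hv ⊢
  rw [hfac', ← Matrix.mulVec_mulVec, hv, Matrix.mulVec_zero]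

theorem msupp_le_of_ker_le {n : ℕ} {A B : Matrix (Fin n) (Fin n) ℂ} (hA : A.IsHermitian)
    (hB : B.IsHermitian) (h : LinearMap.ker B.mulVecLin ≤ LinearMap.ker A.mulVecLin) :
    msupp A ≤ msupp B := by
  obtain ⟨Y, hY⟩ := exists_eq_mul_of_ker_le B A h
  have hfac : A = B * Yᴴ := by
    conv_lhs => rw [← hA.eq, hY, Matrix.conjTranspose_mul, hB.eq]
  rintro _ ⟨v, rfl⟩
  exact ⟨Yᴴ *ᵥ v, by
    rw [Matrix.mulVecLin_apply, Matrix.mulVecLin_apply, Matrix.mulVec_mulVec, ← hfac]⟩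

open scoped MatrixOrder in
theorem exists_eq_conjTranspose_mul_self {n : ℕ} {A : Matrix (Fin n) (Fin n) ℂ}
    (hA : A.PosSemidef) : ∃ B : Matrix (Fin n) (Fin n) ℂ, A = Bᴴ * B :=
  CStarAlgebra.nonneg_iff_eq_star_mul_self.mp hA.nonneg

/-- The set whose infimum defines `Dmax` is nonempty under the support condition: with
`σ = Bᴴ B` and `ρ = Cᴴ C`, the kernel inclusion gives `C = Y B`, hence
`ρ = Bᴴ (Yᴴ Y) B ≤ c σ` for any `c` with `Yᴴ Y ≤ c`. -/
theorem exists_posSemidef_smul_sub {n : ℕ} {ρ σ : Matrix (Fin n) (Fin n) ℂ}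
    (hρ : ρ.PosSemidef) (hσ : σ.PosSemidef) (h : msupp ρ ≤ msupp σ) :
    ∃ l : ℝ, 0 ≤ l ∧ (l • σ - ρ).PosSemidef := by
  have hker := ker_le_of_msupp_le hρ.1 hσ.1 h
  obtain ⟨B, rfl⟩ := exists_eq_conjTranspose_mul_self hσ
  obtain ⟨C, rfl⟩ := exists_eq_conjTranspose_mul_self hρ
  rw [Matrix.ker_mulVecLin_conjTranspose_mul_self,
    Matrix.ker_mulVecLin_conjTranspose_mul_self] at hker
  obtain ⟨Y, rfl⟩ := exists_eq_mul_of_ker_le B C hker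
  obtain ⟨c, hc, hcY⟩ := exists_posSemidef_smul_one_sub (Matrix.isHermitian_conjTranspose_mul_self Y)
  refine ⟨c, hc, ?_⟩
  have := hcY.conjTranspose_mul_mul_same B
  rwa [Matrix.mul_sub, Matrix.sub_mul, Matrix.mul_smul, Matrix.smul_mul, Matrix.mul_one,
    Matrix.mul_assoc Bᴴ (Yᴴ * Y) B, Matrix.mul_assoc Yᴴ Y B, ← Matrix.mul_assoc Bᴴ Yᴴ,
    ← Matrix.conjTranspose_mul] at this

theorem ker_le_of_posSemidef_smul_sub {n : ℕ} {A B : Matrix (Fin n) (Fin n) ℂ}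
    (hA : A.PosSemidef) {l : ℝ} (h : (l • B - A).PosSemidef) :
    LinearMap.ker B.mulVecLin ≤ LinearMap.ker A.mulVecLin := by
  intro v hv
  rw [LinearMap.mem_ker, Matrix.mulVecLin_apply] at hv ⊢
  rw [← hA.dotProduct_mulVec_zero_iff]
  have h1 := h.dotProduct_mulVec_nonneg v
  rw [Matrix.sub_mulVec, Matrix.smul_mulVec, hv, smul_zero, zero_sub, dotProduct_neg,
    neg_nonneg] at h1
  exact le_antisymm h1 (hA.dotProduct_mulVec_nonneg v)

/-- Positivity of a Kraus map. -/
theorem posSemidef_kraus {d d' m : ℕ} (V : Fin m → Matrix (Fin d') (Fin d) ℂ)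
    {X : Matrix (Fin d) (Fin d) ℂ} (hX : X.PosSemidef) :
    (∑ i, V i * X * (V i)ᴴ).PosSemidef :=
  Matrix.posSemidef_sum _ fun i _ => hX.mul_mul_conjTranspose_same (V i)

theorem kraus_smul_sub {d d' m : ℕ} (V : Fin m → Matrix (Fin d') (Fin d) ℂ)
    (ρ σ : Matrix (Fin d) (Fin d) ℂ) (l : ℝ) :
    ∑ i, V i * (l • σ - ρ) * (V i)ᴴ
      = l • (∑ i, V i * σ * (V i)ᴴ) - ∑ i, V i * ρ * (V i)ᴴ := by
  simp only [Matrix.mul_sub, Matrix.sub_mul, Matrix.mul_smul, Matrix.smul_mul,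
    Finset.sum_sub_distrib, Finset.smul_sum]

theorem trace_kraus {d d' m : ℕ} (V : Fin m → Matrix (Fin d') (Fin d) ℂ)
    (hV : ∑ i, (V i)ᴴ * V i = 1) (X : Matrix (Fin d) (Fin d) ℂ) :
    (∑ i, V i * X * (V i)ᴴ).trace = X.trace := by
  calc (∑ i, V i * X * (V i)ᴴ).trace = ((∑ i, (V i)ᴴ * V i) * X).trace := by
        rw [Matrix.trace_sum, Finset.sum_mul, Matrix.trace_sum]
        exact Finset.sum_congr rfl fun i _ => by
          rw [Matrix.trace_mul_comm, Matrix.mul_assoc]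
    _ = X.trace := by rw [hV, Matrix.one_mul]

/-- Taking traces in `ρ ≤ l σ` for a state `ρ`. -/
theorem one_le_mul_trace {n : ℕ} {ρ σ : Matrix (Fin n) (Fin n) ℂ} (hρ : ρ.trace = 1) {l : ℝ}
    (h : (l • σ - ρ).PosSemidef) : 1 ≤ l * σ.trace.re := by
  have h1 := (Complex.le_def.mp h.trace_nonneg).1
  rw [Matrix.trace_sub, Matrix.trace_smul, hρ] at h1
  simpa using h1

/-- monotonicity of the max-relative entropy under CPTP maps in Kraus form,
together with the inclusion of supports `supp T(ρ) ⊆ supp T(σ)`. -/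
theorem stmt6 {d d' m : ℕ} (ρ σ : Matrix (Fin d) (Fin d) ℂ)
    (hρ : ρ.PosSemidef) (hρtr : ρ.trace = 1) (hσ : σ.PosSemidef)
    (hsupp : msupp ρ ≤ msupp σ)
    (V : Fin m → Matrix (Fin d') (Fin d) ℂ)
    (hV : ∑ i, (V i)ᴴ * V i = 1) :
    msupp (∑ i, V i * ρ * (V i)ᴴ) ≤ msupp (∑ i, V i * σ * (V i)ᴴ) ∧
    Dmax (∑ i, V i * ρ * (V i)ᴴ) (∑ i, V i * σ * (V i)ᴴ) ≤ Dmax ρ σ := by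
  set ρ' := ∑ i, V i * ρ * (V i)ᴴ with hρ'
  set σ' := ∑ i, V i * σ * (V i)ᴴ with hσ'
  have hρ'pos : ρ'.PosSemidef := posSemidef_kraus V hρ
  have hσ'pos : σ'.PosSemidef := posSemidef_kraus V hσ
  have hmono : ∀ l : ℝ, (l • σ - ρ).PosSemidef → (l • σ' - ρ').PosSemidef := fun l hl => by
    rw [hρ', hσ', ← kraus_smul_sub]
    exact posSemidef_kraus V hl
  have htr : ρ'.trace = 1 := (trace_kraus V hV ρ).trans hρtr
  obtain ⟨l₀, hl₀, hlpos⟩ := exists_posSemidef_smul_sub hρ hσ hsupp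
  refine ⟨msupp_le_of_ker_le hρ'pos.1 hσ'pos.1
    (ker_le_of_posSemidef_smul_sub hρ'pos (hmono l₀ hlpos)), ?_⟩
  have ht : 0 < σ'.trace.re :=
    pos_of_mul_pos_right (one_pos.trans_le (one_le_mul_trace htr (hmono l₀ hlpos))) hl₀
  -- The infimum for the images is at least `1 / Tr T(σ) > 0`, so `logb 2` is monotone there.
  have hpos : 0 < sInf {l : ℝ | 0 ≤ l ∧ (l • σ' - ρ').PosSemidef} := by
    refine (one_div_pos.mpr ht).trans_le (le_csInf ⟨l₀, hl₀, hmono l₀ hlpos⟩ fun l hl => ?_)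
    rw [div_le_iff₀ ht]
    exact one_le_mul_trace htr hl.2
  exact Real.logb_le_logb_of_le one_lt_two hpos
    (csInf_le_csInf ⟨0, fun l hl => hl.1⟩ ⟨l₀, hl₀, hlpos⟩ fun l hl => ⟨hl.1, hmono l hl.2⟩)
end

section
/- Let ρ and σ be states on a finite-dimensional complex Hilbert space with supp ρ ⊆ supp σ. Then D_min(ρ||σ) ≤ S(ρ||σ), where S is the quantum relative entropy. -/
/-!
Diagonalise `ρ = U diag(p) U*` and `σ = V diag(s) V*`, and put `w i j = |(U* V) i j|²`. This array
is doubly stochastic, and every trace in sight becomes a sum against it: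
`S(ρ‖σ) = ∑ p i log₂ p i - ∑ p i (w i j) log₂ s j` and `Tr(π_ρ σ) = ∑_{p i ≠ 0} w i j * s j =: T`
(`trace_conj_diagonal_mul`). The support condition says that `w i j = 0` whenever `p i ≠ 0` and
`s j = 0` (`overlap_eq_zero`). Since the weights `p i * w i j` sum to `1`, concavity of the
logarithm gives `∑ p i (w i j) log (s j / p i) ≤ log T`, which is the claim. In
`classical_dmin_le` this instance of Jensen's inequality is obtained by averaging
`log x ≤ x - 1` at `x = s j / (p i * T)`.
-/

open scoped ComplexOrder

/-- `log₂` of a Hermitian matrix via functional calculus, with eigenvalue `0` sent to `0`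
(junk value `0` for non-Hermitian input). -/
noncomputable def mlog2 {d : ℕ} (X : Matrix (Fin d) (Fin d) ℂ) : Matrix (Fin d) (Fin d) ℂ :=
  if hX : X.IsHermitian then
    (hX.eigenvectorUnitary : Matrix (Fin d) (Fin d) ℂ) *
      Matrix.diagonal (fun i => if hX.eigenvalues i = 0 then (0:ℂ)
        else ((Real.logb 2 (hX.eigenvalues i) : ℝ) : ℂ)) *
      star (hX.eigenvectorUnitary : Matrix (Fin d) (Fin d) ℂ)
  else 0

/-- The quantum relative entropy `S(ρ‖σ) = Tr[ρ log₂ ρ] - Tr[ρ log₂ σ]`. -/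
noncomputable def relEnt {d : ℕ} (ρ σ : Matrix (Fin d) (Fin d) ℂ) : ℝ :=
  ((ρ * mlog2 ρ).trace - (ρ * mlog2 σ).trace).re

/-- The classical core: `D_min ≤ S`, with natural logarithms, for a pair of spectra `p`, `s` whose
eigenbases have squared overlaps `w`. The convention `Real.log 0 = 0` matches the one for operator
logarithms. -/
lemma classical_dmin_le {ι : Type*} [Fintype ι] (p s : ι → ℝ) (w : ι → ι → ℝ)
    (hp : ∀ i, 0 ≤ p i) (hs : ∀ j, 0 ≤ s j) (hw : ∀ i j, 0 ≤ w i j)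
    (hp1 : ∑ i, p i = 1) (hrow : ∀ i, ∑ j, w i j = 1)
    (hsupp : ∀ i j, p i ≠ 0 → s j = 0 → w i j = 0) :
    - Real.log (∑ i, ∑ j, (if p i ≠ 0 then 1 else 0) * s j * w i j) ≤
      ∑ i, p i * Real.log (p i) - ∑ i, ∑ j, p i * Real.log (s j) * w i j := by
  set T := ∑ i, ∑ j, (if p i ≠ 0 then 1 else 0) * s j * w i j with hT
  have hterm : ∀ i j, 0 ≤ (if p i ≠ 0 then (1 : ℝ) else 0) * s j * w i j := fun i j =>
    mul_nonneg (mul_nonneg (by split_ifs <;> norm_num) (hs j)) (hw i j)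
  have hTpos : 0 < T := by
    obtain ⟨i, hi⟩ : ∃ i, p i ≠ 0 := by
      by_contra! h
      simp [h] at hp1
    obtain ⟨j, hj⟩ : ∃ j, w i j ≠ 0 := by
      by_contra! h
      have := hrow i
      simp [h] at this
    have hsj : s j ≠ 0 := fun h => hj (hsupp i j hi h)
    refine Finset.sum_pos' (fun i _ => Finset.sum_nonneg fun j _ => hterm i j)
      ⟨i, Finset.mem_univ _, Finset.sum_pos' (fun j _ => hterm i j) ⟨j, Finset.mem_univ _, ?_⟩⟩
    rw [if_pos hi, one_mul]
    exact mul_pos (lt_of_le_of_ne (hs j) hsj.symm) (lt_of_le_of_ne (hw i j) hj.symm)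
  have key : ∀ i j, p i * Real.log (s j) * w i j - p i * Real.log (p i) * w i j
      - p i * w i j * Real.log T ≤
      (if p i ≠ 0 then 1 else 0) * s j * w i j / T - p i * w i j := by
    intro i j
    by_cases hi : p i = 0
    · simp [hi]
    by_cases hj : w i j = 0
    · simp [hj]
    have hsj : s j ≠ 0 := fun h => hj (hsupp i j hi h)
    have hpi : 0 < p i := lt_of_le_of_ne (hp i) (Ne.symm hi)
    have hspos : 0 < s j := lt_of_le_of_ne (hs j) hsj.symm
    have h := Real.log_le_sub_one_of_pos (div_pos hspos (mul_pos hpi hTpos))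
    rw [Real.log_div hsj (mul_pos hpi hTpos).ne', Real.log_mul hi hTpos.ne'] at h
    have h2 := mul_le_mul_of_nonneg_left h (mul_nonneg hpi.le (hw i j))
    rw [if_pos hi]
    have e : p i * w i j * (s j / (p i * T) - 1) = 1 * s j * w i j / T - p i * w i j := by
      field_simp
    rw [e] at h2
    linarith
  have hsum := Finset.sum_le_sum fun i (_ : i ∈ Finset.univ) =>
    Finset.sum_le_sum fun j (_ : j ∈ Finset.univ) => key i j
  simp only [Finset.sum_sub_distrib, ← Finset.sum_div] at hsum
  rw [← hT, div_self hTpos.ne'] at hsum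
  simp only [← Finset.mul_sum, ← Finset.sum_mul, hrow, mul_one, hp1] at hsum
  linarith

lemma trace_conj_diagonal_mul {d : ℕ} (U V : Matrix (Fin d) (Fin d) ℂ) (a b : Fin d → ℂ) :
    (U * Matrix.diagonal a * star U * (V * Matrix.diagonal b * star V)).trace =
      ∑ i, ∑ j, a i * b j * (Complex.normSq ((star U * V) i j) : ℂ) := by
  have h1 : (U * Matrix.diagonal a * star U * (V * Matrix.diagonal b * star V)).trace =
      (Matrix.diagonal a * (star U * V) * (Matrix.diagonal b * star (star U * V))).trace := by
    rw [star_mul, star_star]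
    simp only [Matrix.mul_assoc]
    rw [Matrix.trace_mul_comm]
    simp only [Matrix.mul_assoc]
  rw [h1, Matrix.trace]
  refine Finset.sum_congr rfl fun i _ => ?_
  rw [Matrix.diag_apply, Matrix.mul_apply]
  refine Finset.sum_congr rfl fun j _ => ?_
  rw [Matrix.diagonal_mul, Matrix.diagonal_mul, Matrix.star_apply, ← Complex.mul_conj]
  simp only [Complex.star_def]
  ring

/-- An eigenvector of `ρ` with nonzero eigenvalue is orthogonal to every eigenvector of `σ` in
the kernel of `σ`, because it lies in the range of `ρ` and hence in that of `σ`. -/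
lemma overlap_eq_zero {d : ℕ} {ρ σ U V : Matrix (Fin d) (Fin d) ℂ} {p s : Fin d → ℂ}
    (hU : star U * U = 1) (hV : star V * V = 1)
    (hρ : ρ = U * Matrix.diagonal p * star U) (hσ : σ = V * Matrix.diagonal s * star V)
    (hsupp : msupp ρ ≤ msupp σ) {i j : Fin d} (hi : p i ≠ 0) (hj : s j = 0) :
    (star U * V) i j = 0 := by
  obtain ⟨x, hx⟩ := hsupp ⟨U.mulVec (Pi.single i 1), rfl⟩
  simp only [Matrix.mulVecLin_apply] at hx
  have h := congrFun (congrArg (star V).mulVec hx) j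
  simp only [Matrix.mulVec_mulVec] at h
  have e1 : star V * σ = Matrix.diagonal s * star V := by
    rw [hσ, ← mul_assoc, ← mul_assoc, hV, one_mul]
  have e2 : star V * (ρ * U) = star V * U * Matrix.diagonal p := by
    rw [hρ, mul_assoc _ (star U) U, hU, mul_one, mul_assoc]
  rw [e1, e2, ← Matrix.mulVec_mulVec, Matrix.mulVec_diagonal, hj, zero_mul,
    Matrix.mulVec_single_one, Matrix.col_apply, Matrix.mul_diagonal] at h
  have h0 : (star V * U) j i = 0 := (mul_eq_zero.1 h.symm).resolve_right hi
  have e3 : star U * V = star (star V * U) := by rw [star_mul, star_star]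
  rw [e3, Matrix.star_apply, h0, star_zero]

/-- the min-relative entropy is bounded above by the quantum relative
entropy: `D_min(ρ‖σ) ≤ S(ρ‖σ)`. -/
theorem stmt10 {d : ℕ} (ρ σ : Matrix (Fin d) (Fin d) ℂ)
    (hρ : ρ.PosSemidef) (hρtr : ρ.trace = 1)
    (hσ : σ.PosSemidef) (hσtr : σ.trace = 1)
    (hsupp : msupp ρ ≤ msupp σ) :
    Dmin ρ σ ≤ relEnt ρ σ := by
  have hρH := hρ.isHermitian
  have hσH := hσ.isHermitian
  set U : Matrix (Fin d) (Fin d) ℂ := hρH.eigenvectorUnitary.1 with hUdef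
  set V : Matrix (Fin d) (Fin d) ℂ := hσH.eigenvectorUnitary.1 with hVdef
  set p := hρH.eigenvalues with hpdef
  set s := hσH.eigenvalues with hsdef
  have hU : star U * U = 1 := Unitary.coe_star_mul_self _
  have hV : star V * V = 1 := Unitary.coe_star_mul_self _
  have hV' : V * star V = 1 := Unitary.coe_mul_star_self _
  have hρs : ρ = U * Matrix.diagonal (fun i => (p i : ℂ)) * star U := hρH.spectral_theorem
  have hσs : σ = V * Matrix.diagonal (fun i => (s i : ℂ)) * star V := hσH.spectral_theorem
  have hp1 : ∑ i, p i = 1 := by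
    have := hρH.trace_eq_sum_eigenvalues
    rw [hρtr] at this
    have h : ((∑ i, p i : ℝ) : ℂ) = 1 := by
      push_cast
      exact this.symm
    exact_mod_cast h
  -- The rows of the unitary matrix `U* V` have norm one.
  have hrow : ∀ i, ∑ j, Complex.normSq ((star U * V) i j) = 1 := by
    intro i
    have h : (star U * V) * star (star U * V) = 1 := by
      rw [star_mul, star_star, mul_assoc, ← mul_assoc V, hV', one_mul, hU]
    have h2 := congrFun (congrFun h i) i
    rw [Matrix.mul_apply, Matrix.one_apply_eq] at h2
    simp only [Matrix.star_apply, Complex.star_def, Complex.mul_conj] at h2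
    exact_mod_cast h2
  -- The case split in `mlog2` is absorbed by `Real.logb 2 0 = 0`.
  have hlogρ : mlog2 ρ = U * Matrix.diagonal (fun i => ((Real.logb 2 (p i) : ℝ) : ℂ)) * star U := by
    rw [mlog2, dif_pos hρH]
    congr 3
    ext i
    split_ifs with h <;> simp [p, h]
  have hlogσ : mlog2 σ = V * Matrix.diagonal (fun i => ((Real.logb 2 (s i) : ℝ) : ℂ)) * star V := by
    rw [mlog2, dif_pos hσH]
    congr 3
    ext i
    split_ifs with h <;> simp [s, h]
  have hπ : suppProj ρ = U * Matrix.diagonal (fun i => if p i ≠ 0 then (1 : ℂ) else 0) * star U := by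
    rw [suppProj, spectralProj, dif_pos hρH]
  have t1 : ((suppProj ρ * σ).trace).re =
      ∑ i, ∑ j, (if p i ≠ 0 then 1 else 0) * s j * Complex.normSq ((star U * V) i j) := by
    rw [hπ, congrArg (fun X => Matrix.trace (_ * X)) hσs, trace_conj_diagonal_mul]
    have : ((∑ i, ∑ j, (if p i ≠ 0 then 1 else 0) * s j *
        Complex.normSq ((star U * V) i j) : ℝ) : ℂ) =
        ∑ i, ∑ j, (if p i ≠ 0 then (1 : ℂ) else 0) * (s j : ℂ) *
          (Complex.normSq ((star U * V) i j) : ℂ) := by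
      simp only [Complex.ofReal_sum, Complex.ofReal_mul, apply_ite Complex.ofReal,
        Complex.ofReal_one, Complex.ofReal_zero]
    rw [← this, Complex.ofReal_re]
  have t2 : (ρ * mlog2 ρ).trace = ((∑ i, p i * Real.logb 2 (p i) : ℝ) : ℂ) := by
    rw [hlogρ, congrArg (fun X => Matrix.trace (X * _)) hρs, trace_conj_diagonal_mul, hU]
    push_cast
    refine Finset.sum_congr rfl fun i _ => ?_
    rw [Finset.sum_eq_single i]
    · simp
    · intro j _ hj
      simp [Matrix.one_apply_ne hj.symm]
    · simp
  have t3 : (ρ * mlog2 σ).trace = ((∑ i, ∑ j, p i * Real.logb 2 (s j) *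
      Complex.normSq ((star U * V) i j) : ℝ) : ℂ) := by
    rw [hlogσ, congrArg (fun X => Matrix.trace (X * _)) hρs, trace_conj_diagonal_mul]
    push_cast
    rfl
  have main := classical_dmin_le p s (fun i j => Complex.normSq ((star U * V) i j))
    hρ.eigenvalues_nonneg hσ.eigenvalues_nonneg (fun i j => Complex.normSq_nonneg _) hp1 hrow
    (fun i j hi hj => by
      simp only [Complex.normSq_eq_zero]
      exact overlap_eq_zero hU hV hρs hσs hsupp (by exact_mod_cast hi) (by exact_mod_cast hj))
  rw [Dmin, relEnt, t1, t2, t3, ← Complex.ofReal_sub, Complex.ofReal_re]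
  -- Passing from `log` to `log₂` divides both sides by `log 2 > 0`.
  have h2 : (0 : ℝ) < Real.log 2 := Real.log_pos (by norm_num)
  have hlog := div_le_div_of_nonneg_right main h2.le
  simp only [neg_div, sub_div, Finset.sum_div, mul_div_right_comm _ (Complex.normSq _),
    mul_div_assoc, Real.log_div_log] at hlog
  exact hlog
end

section
/- Let ρ and σ be states on a finite-dimensional complex Hilbert space with supp ρ ⊆ supp σ. Then the quantum relative Rényi entropy S_α(ρ||σ) := (1/(α−1)) log₂ Tr(ρ^α σ^{1−α}) converges to D_min(ρ||σ) = −log₂ Tr(π_ρ σ) as α → 0 from above, i.e., lim_{α→0⁺} S_α(ρ||σ) = D_min(ρ||σ). -/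
/-!
The diagonal form of the functional calculus gives `mpow ρ α → suppProj ρ` and
`mpow σ (1 - α) → σ` entrywise as `α → 0`, since a nonzero eigenvalue `t` satisfies `t ^ α → 1`
and `t ^ (1 - α) → t`, while the eigenvalue `0` is sent to `0` throughout. Hence
`Tr (ρ ^ α σ ^ (1 - α)) → Tr (π_ρ σ)`, the prefactor `1 / (α - 1)` tends to `-1`, and the claim
follows from continuity of the logarithm away from `0`.

So it remains to see that `Tr (π_ρ σ) ≠ 0`. If this trace vanishes then so does the positive
semidefinite matrix `π_ρ σ π_ρ`, hence `σ π_ρ = 0` and `σ ρ = σ π_ρ ρ = 0`: the range of `ρ` lies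
in the kernel of `σ`. As it also lies in the range of `σ`, which is orthogonal to this kernel,
`ρ = 0`, contradicting `Tr ρ = 1`.
-/


open scoped ComplexOrder

/-- Real power of a Hermitian matrix via functional calculus, with eigenvalue `0` sent to `0`
(junk value `0` for non-Hermitian input). -/
noncomputable def mpow {d : ℕ} (X : Matrix (Fin d) (Fin d) ℂ) (a : ℝ) :
    Matrix (Fin d) (Fin d) ℂ :=
  if hX : X.IsHermitian then
    (hX.eigenvectorUnitary : Matrix (Fin d) (Fin d) ℂ) *
      Matrix.diagonal (fun i => if hX.eigenvalues i = 0 then (0:ℂ)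
        else (((hX.eigenvalues i) ^ a : ℝ) : ℂ)) *
      star (hX.eigenvectorUnitary : Matrix (Fin d) (Fin d) ℂ)
  else 0

/-- Powers with varying exponent converge once the eigenvalues do, as the eigenbasis of `X` stays
fixed. -/
lemma mpow_tendsto {d : ℕ} {X Y : Matrix (Fin d) (Fin d) ℂ} (hX : X.IsHermitian)
    {f : ℝ → ℝ} {l : Filter ℝ} {g : Fin d → ℂ}
    (hY : Y = (hX.eigenvectorUnitary : Matrix (Fin d) (Fin d) ℂ) * Matrix.diagonal g *
      star (hX.eigenvectorUnitary : Matrix (Fin d) (Fin d) ℂ))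
    (h : ∀ i, Filter.Tendsto (fun α => if hX.eigenvalues i = 0 then (0:ℂ)
        else (((hX.eigenvalues i) ^ (f α) : ℝ) : ℂ)) l (nhds (g i))) :
    Filter.Tendsto (fun α => mpow X (f α)) l (nhds Y) := by
  simp only [mpow, dif_pos hX]
  rw [hY]
  have hd : Filter.Tendsto (fun α => Matrix.diagonal (fun i => if hX.eigenvalues i = 0 then (0:ℂ)
        else (((hX.eigenvalues i) ^ (f α) : ℝ) : ℂ))) l (nhds (Matrix.diagonal g)) :=
    ((continuous_id.matrix_diagonal).tendsto g).comp (tendsto_pi_nhds.2 h)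
  exact (hd.const_mul _).mul_const _

lemma eq_conj_diagonal {d : ℕ} {X : Matrix (Fin d) (Fin d) ℂ} (hX : X.IsHermitian) :
    X = (hX.eigenvectorUnitary : Matrix (Fin d) (Fin d) ℂ) *
      Matrix.diagonal (fun i => (hX.eigenvalues i : ℂ)) *
      star (hX.eigenvectorUnitary : Matrix (Fin d) (Fin d) ℂ) := by
  conv_lhs => rw [hX.spectral_theorem]
  rfl

lemma suppProj_eq {d : ℕ} {X : Matrix (Fin d) (Fin d) ℂ} (hX : X.IsHermitian) :
    suppProj X = (hX.eigenvectorUnitary : Matrix (Fin d) (Fin d) ℂ) *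
      Matrix.diagonal (fun i => if hX.eigenvalues i ≠ 0 then (1 : ℂ) else 0) *
      star (hX.eigenvectorUnitary : Matrix (Fin d) (Fin d) ℂ) := by
  simp only [suppProj, spectralProj, dif_pos hX]

lemma conj_diagonal_mul {d : ℕ} (U : Matrix.unitaryGroup (Fin d) ℂ) (a b : Fin d → ℂ) :
    ((U : Matrix (Fin d) (Fin d) ℂ) * Matrix.diagonal a * star (U : Matrix (Fin d) (Fin d) ℂ)) *
      ((U : Matrix (Fin d) (Fin d) ℂ) * Matrix.diagonal b * star (U : Matrix (Fin d) (Fin d) ℂ)) =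
    (U : Matrix (Fin d) (Fin d) ℂ) * Matrix.diagonal (fun i => a i * b i) *
      star (U : Matrix (Fin d) (Fin d) ℂ) := by
  have h : star (U : Matrix (Fin d) (Fin d) ℂ) * (U : Matrix (Fin d) (Fin d) ℂ) = 1 :=
    Unitary.coe_star_mul_self U
  rw [← Matrix.diagonal_mul_diagonal]
  simp only [mul_assoc]
  rw [← mul_assoc (star (U : Matrix (Fin d) (Fin d) ℂ)) (U : Matrix (Fin d) (Fin d) ℂ), h, one_mul]

lemma suppProj_mul_self {d : ℕ} {X : Matrix (Fin d) (Fin d) ℂ} (hX : X.IsHermitian) :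
    suppProj X * suppProj X = suppProj X := by
  rw [suppProj_eq hX, conj_diagonal_mul]
  congr 3
  funext i
  by_cases h : hX.eigenvalues i = 0 <;> simp [h]

lemma suppProj_mul {d : ℕ} {X : Matrix (Fin d) (Fin d) ℂ} (hX : X.IsHermitian) :
    suppProj X * X = X := by
  conv_lhs => rw [suppProj_eq hX]; arg 2; rw [eq_conj_diagonal hX]
  conv_rhs => rw [eq_conj_diagonal hX]
  rw [conj_diagonal_mul]
  congr 3
  funext i
  by_cases h : hX.eigenvalues i = 0 <;> simp [h]

lemma suppProj_isHermitian {d : ℕ} {X : Matrix (Fin d) (Fin d) ℂ} (hX : X.IsHermitian) :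
    (suppProj X).conjTranspose = suppProj X := by
  rw [suppProj_eq hX, Matrix.star_eq_conjTranspose]
  simp only [Matrix.conjTranspose_mul, Matrix.conjTranspose_conjTranspose,
    Matrix.diagonal_conjTranspose, mul_assoc]
  congr 3
  funext i
  by_cases h : hX.eigenvalues i = 0 <;> simp [h]

/-- If the supports were orthogonal, that is `Tr (π_ρ σ) = 0`, then `supp ρ ≤ supp σ` would force
`ρ = 0`. -/
lemma trace_suppProj_mul_ne_zero {d : ℕ} {ρ σ : Matrix (Fin d) (Fin d) ℂ}
    (hρ : ρ.PosSemidef) (hρ0 : ρ ≠ 0) (hσ : σ.PosSemidef) (hsupp : msupp ρ ≤ msupp σ) :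
    (suppProj ρ * σ).trace.re ≠ 0 := by
  intro h0
  have hP := suppProj_isHermitian hρ.1
  have hpsd : (suppProj ρ * σ * suppProj ρ).PosSemidef := by
    have := hσ.conjTranspose_mul_mul_same (suppProj ρ)
    rwa [hP] at this
  have htr : (suppProj ρ * σ * suppProj ρ).trace = (suppProj ρ * σ).trace := by
    rw [Matrix.trace_mul_comm, ← mul_assoc, suppProj_mul_self hρ.1]
  -- a positive semidefinite trace is real, so its vanishing real part makes it `0`
  have hz : suppProj ρ * σ * suppProj ρ = 0 := by
    rw [← hpsd.trace_eq_zero_iff, htr]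
    have := hpsd.trace_nonneg
    rw [htr, Complex.le_def] at this
    exact Complex.ext h0 this.2.symm
  have hσP : ∀ x, σ.mulVec ((suppProj ρ).mulVec x) = 0 := by
    intro x
    rw [← hσ.dotProduct_mulVec_zero_iff, Matrix.star_mulVec, hP, ← Matrix.dotProduct_mulVec,
      Matrix.mulVec_mulVec, Matrix.mulVec_mulVec, hz]
    simp
  have hσρ : ∀ x, σ.mulVec (ρ.mulVec x) = 0 := by
    intro x
    have := hσP (ρ.mulVec x)
    rwa [Matrix.mulVec_mulVec (M := suppProj ρ), suppProj_mul hρ.1] at this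
  apply hρ0
  apply Matrix.ext_of_mulVec_single
  intro i
  rw [Matrix.zero_mulVec]
  obtain ⟨y, hy⟩ := hsupp (show ρ.mulVec (Pi.single i 1) ∈ msupp ρ from ⟨_, rfl⟩)
  rw [Matrix.mulVecLin_apply] at hy
  rw [← dotProduct_star_self_eq_zero]
  have hv : star (ρ.mulVec (Pi.single i 1)) = star (σ.mulVec y) := by rw [hy]
  rw [hv, Matrix.star_mulVec, hσ.1.eq, ← Matrix.dotProduct_mulVec, hσρ, dotProduct_zero]

/-- the quantum relative Rényi entropy `S_α(ρ‖σ)` converges to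
`D_min(ρ‖σ)` as `α → 0⁺`. -/
theorem stmt13 {d : ℕ} (ρ σ : Matrix (Fin d) (Fin d) ℂ)
    (hρ : ρ.PosSemidef) (hρtr : ρ.trace = 1)
    (hσ : σ.PosSemidef) (hσtr : σ.trace = 1)
    (hsupp : msupp ρ ≤ msupp σ) :
    Filter.Tendsto
      (fun α : ℝ => (1 / (α - 1)) * Real.logb 2 ((mpow ρ α * mpow σ (1 - α)).trace.re))
      (nhdsWithin 0 (Set.Ioi 0)) (nhds (Dmin ρ σ)) := by
  have hρ0 : ρ ≠ 0 := by
    rintro rfl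
    simp at hρtr
  have hne := trace_suppProj_mul_ne_zero hρ hρ0 hσ hsupp
  have hid : Filter.Tendsto (fun α : ℝ => α) (nhdsWithin 0 (Set.Ioi 0)) (nhds 0) :=
    Filter.tendsto_id.mono_left nhdsWithin_le_nhds
  have h1 : Filter.Tendsto (fun α : ℝ => mpow ρ α) (nhdsWithin 0 (Set.Ioi 0))
      (nhds (suppProj ρ)) := by
    refine mpow_tendsto (f := fun α => α) hρ.1 (suppProj_eq hρ.1) fun i => ?_
    by_cases h : hρ.1.eigenvalues i = 0
    · simp [h]
    · simp only [h, if_false, ne_eq, not_false_eq_true, if_true]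
      have := (Complex.continuous_ofReal.tendsto _).comp
        (tendsto_const_nhds.rpow hid (Or.inl h))
      simpa [Function.comp_def] using this
  have h2 : Filter.Tendsto (fun α : ℝ => mpow σ (1 - α)) (nhdsWithin 0 (Set.Ioi 0))
      (nhds σ) := by
    refine mpow_tendsto (f := fun α => 1 - α) hσ.1 (eq_conj_diagonal hσ.1) fun i => ?_
    by_cases h : hσ.1.eigenvalues i = 0
    · simp [h]
    · simp only [h, if_false]
      have := (Complex.continuous_ofReal.tendsto _).comp
        (tendsto_const_nhds.rpow (hid.const_sub 1) (Or.inl h))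
      simpa [Function.comp_def] using this
  have h3 : Filter.Tendsto (fun α : ℝ => (mpow ρ α * mpow σ (1 - α)).trace.re)
      (nhdsWithin 0 (Set.Ioi 0)) (nhds (suppProj ρ * σ).trace.re) := by
    have hc : Continuous fun M : Matrix (Fin d) (Fin d) ℂ => M.trace.re :=
      Complex.continuous_re.comp continuous_id.matrix_trace
    exact (hc.tendsto _).comp (h1.mul h2)
  have h4 := h3.log hne
  have h5 : Filter.Tendsto (fun α : ℝ => 1 / (α - 1)) (nhdsWithin 0 (Set.Ioi 0))
      (nhds (-1)) := by
    have := (hid.sub_const 1).inv₀ (by norm_num)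
    norm_num at this
    simpa using this
  have h6 := h5.mul (h4.div_const (Real.log 2))
  simpa [Dmin, Real.logb] using h6
end
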